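/- arXiv:1602.01293 — 2 statements merged into one kernel-verified Lean document; each statement's English description precedes it below -/
import Mathlib

section
/- Fix two points x, y ∈ X, an exponent q ∈ (1,∞) with conjugate exponent q' = q/(q−1), and a constant C ∈ (0,∞] (extended real). Then the following are equivalent: (i) for every measurable function f : X → [0,∞], ((Tf)(x))^q ≤ C^q · (T(f^q))(y); (ii) (∫_X (p(x,z)/p(y,z))^{q'} · p(y,z) dν(z))^{1/q'} ≤ C. -/
open MeasureTheory ENNReal

/-!
With respect to the measure `p(y, z) ν(dz)` and the ratio `h = p(x, ·) / p(y, ·)`, the Harnack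
inequality says that `f ↦ ∫ h f` is bounded on `L^q` with norm at most `C`. By `L^q`-`L^q'` duality
that norm is the `L^q'` norm of `h`, which is what the integrated inequality bounds. The bound on
the norm is Hölder's inequality; conversely, if `g ≤ h ^ q'` has finite integral, testing on
`g ^ (1 / q)` gives `∫ g ≤ C (∫ g) ^ (1 / q)`, where `∫ g` can be cancelled, and σ-finiteness
recovers `∫ h ^ q'` as the supremum of such `∫ g`.
-/

section Exponents

variable {q q' : ℝ}

lemma rpow_le_rpow_mul_iff_le_mul_rpow_one_div (hq : 0 < q) {a b c : ℝ≥0∞} :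
    a ^ q ≤ c ^ q * b ↔ a ≤ c * b ^ (1 / q) := by
  rw [← ENNReal.rpow_le_rpow_iff (x := a) hq, ENNReal.mul_rpow_of_nonneg _ _ hq.le, one_div,
    ENNReal.rpow_inv_rpow hq.ne']

lemma rpow_one_div_mul_rpow_one_div_eq_self (hqq' : q.HolderConjugate q') (a : ℝ≥0∞) :
    a ^ (1 / q') * a ^ (1 / q) = a := by
  rw [← ENNReal.rpow_add_of_nonneg _ _ hqq'.symm.one_div_nonneg hqq'.one_div_nonneg,
    one_div, one_div, hqq'.symm.inv_add_inv_eq_one, ENNReal.rpow_one]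

lemma rpow_one_div_le_of_le_mul_rpow_one_div (hqq' : q.HolderConjugate q') {a c : ℝ≥0∞}
    (ha : a ≠ ∞) (h : a ≤ c * a ^ (1 / q)) : a ^ (1 / q') ≤ c := by
  obtain rfl | ha₀ := eq_or_ne a 0
  · simp [hqq'.symm.pos]
  have hpow₀ : a ^ (1 / q) ≠ 0 := by simp [ha₀, ha]
  have hpow : a ^ (1 / q) ≠ ∞ := ENNReal.rpow_ne_top_of_nonneg hqq'.one_div_nonneg ha
  rwa [← ENNReal.mul_le_mul_iff_left hpow₀ hpow, rpow_one_div_mul_rpow_one_div_eq_self hqq']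

end Exponents

section Duality

variable {α : Type*} [MeasurableSpace α] {μ : Measure α} {q q' : ℝ} {h : α → ℝ≥0∞} {C : ℝ≥0∞}

lemma exists_simpleFunc_le_lintegral_lt_top_of_lt_lintegral [SigmaFinite μ] {L : ℝ≥0∞}
    (hL : L < ∫⁻ z, h z ∂μ) :
    ∃ g : SimpleFunc α NNReal, (∀ z, g z ≤ h z) ∧ ∫⁻ z, g z ∂μ < ∞ ∧ L < ∫⁻ z, g z ∂μ := by
  simp only [lintegral_eq_nnreal h, lt_iSup_iff] at hL
  obtain ⟨φ, hφh, hLφ⟩ := hL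
  rw [← SimpleFunc.lintegral_eq_lintegral] at hLφ
  obtain ⟨g, hgφ, hg_fin, hLg⟩ := SimpleFunc.exists_lt_lintegral_simpleFunc_of_lt_lintegral hLφ
  exact ⟨g, fun z ↦ (ENNReal.coe_le_coe.2 (hgφ z)).trans (hφh z), hg_fin, hLg⟩

lemma rpow_lintegral_le_of_le_rpow_of_forall_lintegral_mul_le (hqq' : q.HolderConjugate q')
    (hC : ∀ f : α → ℝ≥0∞, Measurable f →
      ∫⁻ z, h z * f z ∂μ ≤ C * (∫⁻ z, f z ^ q ∂μ) ^ (1 / q))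
    {g : α → ℝ≥0∞} (hg : Measurable g) (hgh : ∀ z, g z ≤ h z ^ q') (hg_fin : ∫⁻ z, g z ∂μ ≠ ∞) :
    (∫⁻ z, g z ∂μ) ^ (1 / q') ≤ C := by
  refine rpow_one_div_le_of_le_mul_rpow_one_div hqq' hg_fin ?_
  calc ∫⁻ z, g z ∂μ
      = ∫⁻ z, g z ^ (1 / q') * g z ^ (1 / q) ∂μ := by
        simp only [rpow_one_div_mul_rpow_one_div_eq_self hqq']
    _ ≤ ∫⁻ z, h z * g z ^ (1 / q) ∂μ := by
        gcongr with z
        rw [one_div, ENNReal.rpow_inv_le_iff hqq'.symm.pos]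
        exact hgh z
    _ ≤ C * (∫⁻ z, (g z ^ (1 / q)) ^ q ∂μ) ^ (1 / q) := hC _ (hg.pow_const _)
    _ = C * (∫⁻ z, g z ∂μ) ^ (1 / q) := by
        simp only [one_div, ENNReal.rpow_inv_rpow hqq'.ne_zero]

theorem rpow_lintegral_rpow_le_of_forall_lintegral_mul_le [SigmaFinite μ]
    (hqq' : q.HolderConjugate q')
    (hC : ∀ f : α → ℝ≥0∞, Measurable f →
      ∫⁻ z, h z * f z ∂μ ≤ C * (∫⁻ z, f z ^ q ∂μ) ^ (1 / q)) :
    (∫⁻ z, h z ^ q' ∂μ) ^ (1 / q') ≤ C := by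
  rw [one_div, ENNReal.rpow_inv_le_iff hqq'.symm.pos]
  refine le_of_forall_lt fun L hL ↦ ?_
  obtain ⟨g, hgh, hg_fin, hLg⟩ := exists_simpleFunc_le_lintegral_lt_top_of_lt_lintegral hL
  refine hLg.trans_le ?_
  rw [← ENNReal.rpow_inv_le_iff hqq'.symm.pos, ← one_div]
  exact rpow_lintegral_le_of_le_rpow_of_forall_lintegral_mul_le hqq' hC
    g.measurable.coe_nnreal_ennreal hgh hg_fin.ne

theorem forall_lintegral_mul_le_iff_rpow_lintegral_rpow_le [SigmaFinite μ]
    (hqq' : q.HolderConjugate q') (hh : AEMeasurable h μ) :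
    (∀ f : α → ℝ≥0∞, Measurable f →
      ∫⁻ z, h z * f z ∂μ ≤ C * (∫⁻ z, f z ^ q ∂μ) ^ (1 / q)) ↔
      (∫⁻ z, h z ^ q' ∂μ) ^ (1 / q') ≤ C := by
  refine ⟨rpow_lintegral_rpow_le_of_forall_lintegral_mul_le hqq', fun hC f hf ↦ ?_⟩
  calc ∫⁻ z, h z * f z ∂μ
      ≤ (∫⁻ z, h z ^ q' ∂μ) ^ (1 / q') * (∫⁻ z, f z ^ q ∂μ) ^ (1 / q) :=
        ENNReal.lintegral_mul_le_Lp_mul_Lq μ hqq'.symm hh hf.aemeasurable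
    _ ≤ C * (∫⁻ z, f z ^ q ∂μ) ^ (1 / q) := by gcongr

end Duality

lemma lintegral_withDensity_div_mul {α : Type*} [MeasurableSpace α] {ν : Measure α}
    {b : α → ℝ≥0∞} (hb : AEMeasurable b ν) (hb₀ : ∀ᵐ z ∂ν, b z ≠ 0) (hb_top : ∀ᵐ z ∂ν, b z ≠ ∞)
    (a f : α → ℝ≥0∞) :
    ∫⁻ z, a z / b z * f z ∂ν.withDensity b = ∫⁻ z, a z * f z ∂ν := by
  rw [lintegral_withDensity_eq_lintegral_mul_non_measurable₀ ν hb
    (hb_top.mono fun _ ↦ Ne.lt_top)]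
  refine lintegral_congr_ae ?_
  filter_upwards [hb₀, hb_top] with z hz₀ hz_top
  rw [Pi.mul_apply, ← mul_assoc, ENNReal.mul_div_cancel hz₀ hz_top]

theorem wang_harnack_iff_integrated_harnack_general {α : Type*} [MeasurableSpace α]
    {ν : Measure α} [SigmaFinite ν] {a b : α → ℝ≥0∞} (ha : AEMeasurable a ν)
    (hb : AEMeasurable b ν) (hb₀ : ∀ᵐ z ∂ν, b z ≠ 0) (hb_top : ∀ᵐ z ∂ν, b z ≠ ∞)
    {q q' : ℝ} (hqq' : q.HolderConjugate q') (C : ℝ≥0∞) :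
    (∀ f : α → ℝ≥0∞, Measurable f →
      (∫⁻ z, a z * f z ∂ν) ^ q ≤ C ^ q * ∫⁻ z, b z * f z ^ q ∂ν) ↔
      (∫⁻ z, (a z / b z) ^ q' * b z ∂ν) ^ (1 / q') ≤ C := by
  have : SigmaFinite (ν.withDensity b) := SigmaFinite.withDensity_of_ne_top hb_top
  have lintegral_mul_eq (f : α → ℝ≥0∞) : ∫⁻ z, b z * f z ∂ν = ∫⁻ z, f z ∂ν.withDensity b :=
    (lintegral_withDensity_eq_lintegral_mul_non_measurable₀ ν hb
      (hb_top.mono fun _ ↦ Ne.lt_top) f).symm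
  have hh : AEMeasurable (fun z ↦ a z / b z) (ν.withDensity b) :=
    (ha.div hb).mono_ac (withDensity_absolutelyContinuous ν b)
  simp only [mul_comm _ (b _), lintegral_mul_eq, ← lintegral_withDensity_div_mul hb hb₀ hb_top a,
    rpow_le_rpow_mul_iff_le_mul_rpow_one_div hqq'.pos]
  exact forall_lintegral_mul_le_iff_rpow_lintegral_rpow_le hqq' hh

/-- Wang-type Harnack inequality for a positive symmetric conservative kernel is
equivalent to an integrated Harnack inequality (Proposition 4.1). -/
theorem wang_harnack_iff_integrated_harnack
    {X : Type*} [MeasurableSpace X] (ν : Measure X) [SigmaFinite ν]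
    (p : X → X → ℝ) (hp_meas : Measurable (Function.uncurry p))
    (hp_pos : ∀ x y, 0 < p x y)
    (hp_symm : ∀ x y, p x y = p y x)
    (hp_cons : ∀ x, ∫⁻ y, ENNReal.ofReal (p x y) ∂ν = 1)
    (T : (X → ℝ≥0∞) → X → ℝ≥0∞)
    (hT : ∀ f x, T f x = ∫⁻ z, ENNReal.ofReal (p x z) * f z ∂ν)
    (x y : X) (q : ℝ) (hq : 1 < q) (q' : ℝ) (hq' : q' = q / (q - 1))
    (C : ℝ≥0∞) (hC : 0 < C) :
    (∀ f : X → ℝ≥0∞, Measurable f →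
        (T f x) ^ q ≤ C ^ q * T (fun z => (f z) ^ q) y) ↔
      (∫⁻ z, (ENNReal.ofReal (p x z / p y z)) ^ q' * ENNReal.ofReal (p y z) ∂ν)
          ^ (1 / q') ≤ C := by
  have h_meas (w : X) : AEMeasurable (fun z ↦ ENNReal.ofReal (p w z)) ν :=
    hp_meas.of_uncurry_left.ennreal_ofReal.aemeasurable
  have hqq' : q.HolderConjugate q' := hq' ▸ .conjExponent hq
  simpa only [hT, ENNReal.ofReal_div_of_pos (hp_pos y _)] using
    wang_harnack_iff_integrated_harnack_general (h_meas x) (h_meas y)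
      (.of_forall fun z ↦ (ENNReal.ofReal_pos.2 (hp_pos y z)).ne')
      (.of_forall fun _ ↦ ENNReal.ofReal_ne_top) hqq' C
end

section
/- Fix two points x, y ∈ X and a constant K ≥ 0. Suppose that for every q ∈ (1,∞) with conjugate exponent q' = q/(q−1) and every measurable f : X → [0,∞], one has the Wang-type Harnack inequality ((Tf)(x))^q ≤ exp(q'·K) · (T(f^q))(y). Then for every r ∈ (1,∞), the integrated Harnack inequality (∫_X (p(x,z)/p(y,z))^{r} · p(y,z) dν(z))^{1/r} ≤ exp((r−1)·K) holds. -/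
open MeasureTheory ENNReal

/-!
Relative to the measure `p(y,·)ν`, the kernel `p(x,·)` has density `g = p(x,·)/p(y,·)`, and the
Wang-type inequality with exponent `q` says that the functional `f ↦ ∫ g f` is bounded on `L^q`
with norm at most `exp(q'K/q)`. By the converse of Hölder's inequality this bounds the norm of `g`
in `L^r`, `r = q'`, and `q'K/q = (r-1)K`.
-/

section ConverseHolder

variable {α : Type*} [MeasurableSpace α] {μ : Measure α} {g : α → ℝ≥0∞} {C : ℝ≥0∞} {q r : ℝ}

theorem rpow_inv_le_of_le_mul_rpow_inv (hqr : q.HolderConjugate r) {J : ℝ≥0∞} (hJ : J ≠ ∞)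
    (h : J ≤ C * J ^ q⁻¹) : J ^ r⁻¹ ≤ C := by
  rcases eq_or_ne J 0 with rfl | hJ0
  · simp only [ENNReal.zero_rpow_of_pos hqr.symm.inv_pos, zero_le]
  · rw [← hqr.one_sub_inv, ENNReal.rpow_sub _ _ hJ0 hJ, ENNReal.rpow_one]
    exact ENNReal.div_le_of_le_mul h

-- Test the hypothesis against `φ ^ q⁻¹`: since `φ ^ r⁻¹ ≤ g`, the left side is at least `∫ φ`.
theorem lintegral_rpow_inv_le_of_le_rpow_of_forall_lintegral_mul_le (hqr : q.HolderConjugate r)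
    (hg : ∀ f : α → ℝ≥0∞, Measurable f →
      ∫⁻ a, g a * f a ∂μ ≤ C * (∫⁻ a, f a ^ q ∂μ) ^ q⁻¹)
    {φ : α → ℝ≥0∞} (hφ : Measurable φ) (hφg : ∀ a, φ a ≤ g a ^ r) (hφ_int : ∫⁻ a, φ a ∂μ ≠ ∞) :
    (∫⁻ a, φ a ∂μ) ^ r⁻¹ ≤ C := by
  refine rpow_inv_le_of_le_mul_rpow_inv hqr hφ_int ?_
  have hle (a : α) : φ a ≤ g a * φ a ^ q⁻¹ := calc
    φ a = φ a ^ r⁻¹ * φ a ^ q⁻¹ := by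
      rw [← ENNReal.rpow_add_of_nonneg _ _ hqr.symm.inv_nonneg hqr.inv_nonneg,
        hqr.symm.inv_add_inv_eq_one, ENNReal.rpow_one]
    _ ≤ g a * φ a ^ q⁻¹ := by
      gcongr
      exact (ENNReal.rpow_inv_le_iff hqr.symm.pos).2 (hφg a)
  calc
    ∫⁻ a, φ a ∂μ ≤ ∫⁻ a, g a * φ a ^ q⁻¹ ∂μ := lintegral_mono hle
    _ ≤ C * (∫⁻ a, (φ a ^ q⁻¹) ^ q ∂μ) ^ q⁻¹ := hg _ (hφ.pow_const _)
    _ = C * (∫⁻ a, φ a ∂μ) ^ q⁻¹ := by simp only [ENNReal.rpow_inv_rpow hqr.ne_zero]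

theorem exists_lt_lintegral_simpleFunc_of_lt_lintegral_ennreal [SigmaFinite μ] {L : ℝ≥0∞}
    (hL : L < ∫⁻ a, g a ∂μ) :
    ∃ φ : SimpleFunc α NNReal, (∀ a, φ a ≤ g a) ∧ ∫⁻ a, φ a ∂μ < ∞ ∧ L < ∫⁻ a, φ a ∂μ := by
  simp only [lintegral_eq_nnreal g, lt_iSup_iff] at hL
  obtain ⟨ψ, hψg, hLψ⟩ := hL
  rw [← SimpleFunc.lintegral_eq_lintegral] at hLψ
  obtain ⟨φ, hφψ, hφ_int, hLφ⟩ := SimpleFunc.exists_lt_lintegral_simpleFunc_of_lt_lintegral hLψ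
  exact ⟨φ, fun a => (ENNReal.coe_le_coe.2 (hφψ a)).trans (hψg a), hφ_int, hLφ⟩

theorem lintegral_rpow_rpow_inv_le_of_forall_lintegral_mul_le [SigmaFinite μ]
    (hqr : q.HolderConjugate r)
    (hg : ∀ f : α → ℝ≥0∞, Measurable f →
      ∫⁻ a, g a * f a ∂μ ≤ C * (∫⁻ a, f a ^ q ∂μ) ^ q⁻¹) :
    (∫⁻ a, g a ^ r ∂μ) ^ r⁻¹ ≤ C := by
  rw [ENNReal.rpow_inv_le_iff hqr.symm.pos]
  by_contra! hlt
  obtain ⟨φ, hφg, hφ_int, hltφ⟩ := exists_lt_lintegral_simpleFunc_of_lt_lintegral_ennreal hlt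
  refine hltφ.not_ge ((ENNReal.rpow_inv_le_iff hqr.symm.pos).1 ?_)
  exact lintegral_rpow_inv_le_of_le_rpow_of_forall_lintegral_mul_le hqr hg
    φ.measurable.coe_nnreal_ennreal hφg hφ_int.ne

end ConverseHolder

theorem lintegral_withDensity_ofReal {α : Type*} [MeasurableSpace α] (ν : Measure α) {v : α → ℝ}
    (hv : Measurable v) (F : α → ℝ≥0∞) :
    ∫⁻ a, F a ∂ν.withDensity (fun a => ENNReal.ofReal (v a)) =
      ∫⁻ a, ENNReal.ofReal (v a) * F a ∂ν :=
  lintegral_withDensity_eq_lintegral_mul_non_measurable _ hv.ennreal_ofReal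
    (.of_forall fun _ => ENNReal.ofReal_lt_top) F

theorem lintegral_div_withDensity_ofReal {α : Type*} [MeasurableSpace α] (ν : Measure α)
    (u : α → ℝ) {v : α → ℝ} (hv : Measurable v) (hv_pos : ∀ a, 0 < v a) (f : α → ℝ≥0∞) :
    ∫⁻ a, ENNReal.ofReal (u a / v a) * f a ∂ν.withDensity (fun a => ENNReal.ofReal (v a)) =
      ∫⁻ a, ENNReal.ofReal (u a) * f a ∂ν := by
  rw [lintegral_withDensity_ofReal ν hv]
  refine lintegral_congr fun a => ?_
  rw [← mul_assoc, ← ENNReal.ofReal_mul (hv_pos a).le, mul_div_cancel₀ _ (hv_pos a).ne']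

theorem ofReal_exp_mul_rpow_inv {q r : ℝ} (hqr : q.HolderConjugate r) (K : ℝ) :
    ENNReal.ofReal (Real.exp (r * K)) ^ q⁻¹ = ENNReal.ofReal (Real.exp ((r - 1) * K)) := by
  rw [ENNReal.ofReal_rpow_of_pos (Real.exp_pos _), ← Real.exp_mul,
    ← hqr.symm.div_conj_eq_sub_one, div_eq_mul_inv, mul_right_comm]

theorem integrated_harnack_of_wang_harnack_general
    {X : Type*} [MeasurableSpace X] (ν : Measure X) [SigmaFinite ν]
    (p : X → X → ℝ) (hp_meas : Measurable (Function.uncurry p))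
    (hp_pos : ∀ x y, 0 < p x y) (x y : X) (K : ℝ)
    {q r : ℝ} (hqr : q.HolderConjugate r)
    (hWang : ∀ f : X → ℝ≥0∞, Measurable f →
      (∫⁻ z, ENNReal.ofReal (p x z) * f z ∂ν) ^ q ≤
        ENNReal.ofReal (Real.exp (r * K)) * ∫⁻ z, ENNReal.ofReal (p y z) * f z ^ q ∂ν) :
    (∫⁻ z, ENNReal.ofReal (p x z / p y z) ^ r * ENNReal.ofReal (p y z) ∂ν) ^ (1 / r) ≤
      ENNReal.ofReal (Real.exp ((r - 1) * K)) := by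
  have hpy : Measurable (p y) := hp_meas.of_uncurry_left
  have hbound : ∀ f : X → ℝ≥0∞, Measurable f →
      ∫⁻ z, ENNReal.ofReal (p x z / p y z) * f z
          ∂ν.withDensity (fun z => ENNReal.ofReal (p y z)) ≤
        ENNReal.ofReal (Real.exp ((r - 1) * K)) *
          (∫⁻ z, f z ^ q ∂ν.withDensity (fun z => ENNReal.ofReal (p y z))) ^ q⁻¹ := by
    intro f hf
    rw [lintegral_div_withDensity_ofReal ν (p x) hpy (hp_pos y), lintegral_withDensity_ofReal ν hpy,
      ← ofReal_exp_mul_rpow_inv hqr, ← ENNReal.mul_rpow_of_nonneg _ _ hqr.inv_nonneg,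
      ENNReal.le_rpow_inv_iff hqr.pos]
    exact hWang f hf
  have hnorm := lintegral_rpow_rpow_inv_le_of_forall_lintegral_mul_le hqr hbound
  simpa only [lintegral_withDensity_ofReal ν hpy, one_div, mul_comm] using hnorm

/-- If the Wang-type Harnack inequality `((Tf)(x))^q ≤ exp(q' K) (T f^q)(y)` holds
for all `q ∈ (1,∞)` (with `q' = q/(q-1)`) and all nonnegative measurable `f`, then
the integrated Harnack inequality
`(∫ (p(x,z)/p(y,z))^r p(y,z) dν(z))^{1/r} ≤ exp((r-1) K)` holds for all `r ∈ (1,∞)`. -/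
theorem integrated_harnack_of_wang_harnack
    {X : Type*} [MeasurableSpace X] (ν : Measure X) [SigmaFinite ν]
    (p : X → X → ℝ) (hp_meas : Measurable (Function.uncurry p))
    (hp_pos : ∀ x y, 0 < p x y)
    (hp_symm : ∀ x y, p x y = p y x)
    (hp_cons : ∀ x, ∫⁻ y, ENNReal.ofReal (p x y) ∂ν = 1)
    (T : (X → ℝ≥0∞) → X → ℝ≥0∞)
    (hT : ∀ f x, T f x = ∫⁻ z, ENNReal.ofReal (p x z) * f z ∂ν)
    (x y : X) (K : ℝ) (hK : 0 ≤ K)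
    (hWang : ∀ q : ℝ, 1 < q → ∀ f : X → ℝ≥0∞, Measurable f →
      (T f x) ^ q ≤ ENNReal.ofReal (Real.exp (q / (q - 1) * K)) *
        T (fun z => (f z) ^ q) y) :
    ∀ r : ℝ, 1 < r →
      (∫⁻ z, (ENNReal.ofReal (p x z / p y z)) ^ r * ENNReal.ofReal (p y z) ∂ν)
          ^ (1 / r) ≤ ENNReal.ofReal (Real.exp ((r - 1) * K)) := by
  intro r hr
  have hrq := Real.HolderConjugate.conjExponent hr
  refine integrated_harnack_of_wang_harnack_general ν p hp_meas hp_pos x y K hrq.symm fun f hf => ?_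
  simpa only [hT, ← hrq.symm.conjugate_eq] using hWang _ hrq.symm.lt f hf
end
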